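/- arXiv:2007.13413 — 2 statements merged into one kernel-verified Lean document; each statement's English description precedes it below -/
import Mathlib

section
/- Let f : ℝ → ℝ be differentiable and strictly convex on all of ℝ, let n p : ℝ satisfy deriv f n < 0 and deriv f p > 0, let w be the unique point in (n, p) with deriv f w = 0, and let a b : ℕ → ℝ be the bisection sequences with a 0 = n, b 0 = p, and for each k, letting m = (a k + b k)/2: if deriv f m ≤ 0 then a (k+1) = m and b (k+1) = b k, else a (k+1) = a k and b (k+1) = m. Then for every k : ℕ, a k ≤ w and w < b k. -/
theorem bisection_brackets_optimum
    (f : ℝ → ℝ) (hf : Differentiable ℝ f)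
    (hconv : StrictConvexOn ℝ Set.univ f)
    (n p : ℝ) (hn : deriv f n < 0) (hp : deriv f p > 0)
    (a b : ℕ → ℝ) (ha0 : a 0 = n) (hb0 : b 0 = p)
    (hstep : ∀ k : ℕ,
      if deriv f ((a k + b k) / 2) ≤ 0
      then a (k + 1) = (a k + b k) / 2 ∧ b (k + 1) = b k
      else a (k + 1) = a k ∧ b (k + 1) = (a k + b k) / 2)
    (w : ℝ) (hw : w ∈ Set.Ioo n p) (hw0 : deriv f w = 0)
    (hwu : ∀ w' : ℝ, w' ∈ Set.Ioo n p → deriv f w' = 0 → w' = w) :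
    ∀ k : ℕ, a k ≤ w ∧ w < b k := by
  have hmono : StrictMono (deriv f) :=
    strictMonoOn_univ.mp (hconv.strictMonoOn_deriv fun x _ => hf x)
  intro k
  induction k with
  | zero => rw [ha0, hb0]; exact ⟨hw.1.le, hw.2⟩
  | succ k ih =>
    have h := hstep k
    split_ifs at h with hm
    · rw [h.1, h.2]
      refine ⟨?_, ih.2⟩
      rw [← hw0] at hm
      exact hmono.le_iff_le.mp hm
    · rw [h.1, h.2]
      refine ⟨ih.1, ?_⟩
      rw [← hw0, not_le] at hm
      exact hmono.lt_iff_lt.mp hm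
end

section
/- Let f : ℝ → ℝ be differentiable and strictly convex on all of ℝ, let n p : ℝ satisfy deriv f n < 0 and deriv f p > 0, let w be the unique point in (n, p) with deriv f w = 0, and let a b : ℕ → ℝ be the bisection sequences with a 0 = n, b 0 = p, and for each k, letting m = (a k + b k)/2: if deriv f m ≤ 0 then a (k+1) = m and b (k+1) = b k, else a (k+1) = a k and b (k+1) = m. Then the sequences a and b both converge to w, and the sequence of function values f((a k + b k)/2) converges to f w, which equals the global minimum value of f. -/
theorem bisection_converges_to_optimum
    (f : ℝ → ℝ) (hf : Differentiable ℝ f)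
    (hconv : StrictConvexOn ℝ Set.univ f)
    (n p : ℝ) (hn : deriv f n < 0) (hp : deriv f p > 0)
    (a b : ℕ → ℝ) (ha0 : a 0 = n) (hb0 : b 0 = p)
    (hstep : ∀ k : ℕ,
      if deriv f ((a k + b k) / 2) ≤ 0
      then a (k + 1) = (a k + b k) / 2 ∧ b (k + 1) = b k
      else a (k + 1) = a k ∧ b (k + 1) = (a k + b k) / 2)
    (w : ℝ) (hw : w ∈ Set.Ioo n p) (hw0 : deriv f w = 0)
    (hwu : ∀ w' : ℝ, w' ∈ Set.Ioo n p → deriv f w' = 0 → w' = w) :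
    Filter.Tendsto a Filter.atTop (nhds w) ∧
    Filter.Tendsto b Filter.atTop (nhds w) ∧
    Filter.Tendsto (fun k => f ((a k + b k) / 2)) Filter.atTop (nhds (f w)) ∧
    ∀ y : ℝ, f w ≤ f y := by
  have hmono : StrictMonoOn (deriv f) Set.univ :=
    hconv.strictMonoOn_deriv (fun x _ => hf x)
  have hle : ∀ x, deriv f x ≤ 0 → x ≤ w := by
    intro x hx
    by_contra! h
    have := hmono (Set.mem_univ w) (Set.mem_univ x) h
    linarith
  have hge : ∀ x, ¬ deriv f x ≤ 0 → w ≤ x := by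
    intro x hx
    by_contra! h
    have := hmono (Set.mem_univ x) (Set.mem_univ w) h
    exact hx (by linarith)
  have hinv : ∀ k, a k ≤ w ∧ w ≤ b k ∧ b k - a k = (p - n) * (1 / 2 : ℝ) ^ k := by
    intro k
    induction k with
    | zero =>
      rw [ha0, hb0]
      exact ⟨hw.1.le, hw.2.le, by simp⟩
    | succ k ih =>
      obtain ⟨h1, h2, h3⟩ := ih
      have hs := hstep k
      rw [pow_succ]
      split_ifs at hs with hc
      · rw [hs.1, hs.2]
        exact ⟨hle _ hc, h2, by linarith⟩
      · rw [hs.1, hs.2]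
        exact ⟨h1, hge _ hc, by linarith⟩
  have hlim : Filter.Tendsto (fun k : ℕ => (p - n) * (1 / 2 : ℝ) ^ k) Filter.atTop (nhds 0) := by
    have := (tendsto_pow_atTop_nhds_zero_of_lt_one (r := (1 / 2 : ℝ))
      (by norm_num) (by norm_num)).const_mul (p - n)
    simpa using this
  have hA : Filter.Tendsto a Filter.atTop (nhds w) := by
    have hl := hlim.const_sub w
    rw [sub_zero] at hl
    refine tendsto_of_tendsto_of_tendsto_of_le_of_le hl tendsto_const_nhds ?_ ?_
    · intro k
      obtain ⟨h1, h2, h3⟩ := hinv k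
      show w - (p - n) * (1 / 2 : ℝ) ^ k ≤ a k
      linarith
    · intro k
      exact (hinv k).1
  have hB : Filter.Tendsto b Filter.atTop (nhds w) := by
    have hl := hlim.const_add w
    rw [add_zero] at hl
    refine tendsto_of_tendsto_of_tendsto_of_le_of_le tendsto_const_nhds hl ?_ ?_
    · intro k
      exact (hinv k).2.1
    · intro k
      obtain ⟨h1, h2, h3⟩ := hinv k
      show b k ≤ w + (p - n) * (1 / 2 : ℝ) ^ k
      linarith
  refine ⟨hA, hB, ?_, ?_⟩
  · have hm : Filter.Tendsto (fun k => (a k + b k) / 2) Filter.atTop (nhds w) := by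
      have := (hA.add hB).div_const 2
      simpa using this
    exact (hf.continuous.tendsto w).comp hm
  · intro y
    rcases lt_trichotomy w y with h | h | h
    · have := hconv.convexOn.deriv_le_slope (Set.mem_univ w) (Set.mem_univ y) h (hf w)
      rw [hw0, slope_def_field, le_div_iff₀ (by linarith)] at this
      linarith
    · rw [h]
    · have := hconv.convexOn.slope_le_deriv (Set.mem_univ y) (Set.mem_univ w) h (hf w)
      rw [hw0, slope_def_field, div_le_iff₀ (by linarith)] at this
      linarith
end
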